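/- Let V be a finite vertex type, G a connected simple graph on V, and w : Sym2 V → ℝ an edge-weight function that is injective on the edge set of G. Let T be a minimum spanning tree of G, i.e., T ≤ G, T is connected and acyclic, and the total weight Σ_{e ∈ edges(T)} w(e) is minimal among all connected acyclic spanning subgraphs of G. Then T is path-max equivalent to G: for all vertices u and v, PathMax_T(u,v) = PathMax_G(u,v), i.e., the minimum over all paths in T from u to v of the maximum edge weight on the path equals the minimum over all paths in G from u to v of the maximum edge weight on the path. -/

import Mathlib

/-- The maximum edge weight on a walk `p` (as the supremum of the weights of
its edges). -/
noncomputable def walkMax {V : Type*} {G : SimpleGraph V} (w : Sym2 V → ℝ)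
    {u v : V} (p : G.Walk u v) : ℝ :=
  sSup (w '' {e | e ∈ p.edges})

/-- `pathMax G w u v` is the minimum, over all paths `P` from `u` to `v` in
`G`, of the maximum edge weight on `P`. -/
noncomputable def pathMax {V : Type*} (G : SimpleGraph V) (w : Sym2 V → ℝ)
    (u v : V) : ℝ :=
  sInf {m | ∃ p : G.Walk u v, p.IsPath ∧ m = walkMax w p}

/-!
If the path of a minimum spanning tree `T` from `u` to `v` uses an edge `e`, then deleting `e` from
`T` separates `u` from `v`, so every walk of `G` from `u` to `v` crosses this cut along some edge
`f`. Exchanging `e` for `f` gives another spanning tree, so minimality forces `w e ≤ w f`. Hence the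
tree path, which is also a path of `G`, has the least maximum edge weight.
-/

open SimpleGraph

section EdgeExchange

variable {V : Type*} {G F T : SimpleGraph V} {e : Sym2 V} {u v x y : V}

theorem eq_of_isPath_of_isAcyclic (hT : T.IsAcyclic) {p q : T.Walk u v} (hp : p.IsPath)
    (hq : q.IsPath) : p = q :=
  have := hT.subsingleton_path u v
  congrArg Subtype.val (Subsingleton.elim (⟨p, hp⟩ : T.Path u v) ⟨q, hq⟩)

theorem not_reachable_deleteEdges_of_mem_edges (hT : T.IsAcyclic) {p : T.Walk u v}
    (hp : p.IsPath) (he : e ∈ p.edges) : ¬(T.deleteEdges {e}).Reachable u v := by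
  intro hreach
  obtain ⟨r, hr⟩ := hreach.exists_isPath
  have hle : T.deleteEdges {e} ≤ T := T.deleteEdges_le _
  have hpr : p = r.mapLe hle :=
    eq_of_isPath_of_isAcyclic hT hp ((Walk.isPath_mapLe hle).2 hr)
  rw [hpr, Walk.edges_mapLe_eq_edges] at he
  have heDeleted : e ∈ T.edgeSet \ {e} := edgeSet_deleteEdges {e} ▸ r.edges_subset_edgeSet he
  exact heDeleted.2 rfl

theorem exists_mem_edges_not_reachable (q : G.Walk u v) (huv : ¬F.Reachable u v) :
    ∃ x y, s(x, y) ∈ q.edges ∧ ¬F.Reachable x y := by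
  obtain ⟨d, hd, hfst, hsnd⟩ :=
    q.exists_boundary_dart {z | F.Reachable u z} (Reachable.refl u) huv
  exact ⟨d.fst, d.snd, List.mem_map_of_mem hd, fun h ↦ hsnd (Reachable.trans hfst h)⟩

theorem edgeSet_deleteEdges_sup_edge (hxy : x ≠ y) :
    (T.deleteEdges {e} ⊔ edge x y).edgeSet = insert s(x, y) (T.edgeSet \ {e}) := by
  rw [edgeSet_sup, edgeSet_deleteEdges, edgeSet_edge_of_ne hxy, Set.union_singleton]

theorem le_of_deleteEdges_le (hle : T.deleteEdges {e} ≤ G) (he : e ∈ G.edgeSet) : T ≤ G := by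
  rw [← edgeSet_subset_edgeSet, edgeSet_deleteEdges, Set.sdiff_singleton_subset_iff,
    Set.insert_eq_of_mem he] at hle
  exact edgeSet_subset_edgeSet.1 hle

theorem isTree_deleteEdges_sup_edge (hT : T.IsTree)
    (hxy : ¬(T.deleteEdges {e}).Reachable x y) : (T.deleteEdges {e} ⊔ edge x y).IsTree := by
  have hne : x ≠ y := fun h ↦ hxy (h ▸ Reachable.refl x)
  have hacyclic : (T.deleteEdges {e} ⊔ edge x y).IsAcyclic :=
    (hT.isAcyclic.anti (T.deleteEdges_le _)).sup_edge_of_not_reachable hxy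
  -- Extend the exchanged forest to a spanning tree `S` of `T ⊔ edge x y`. The only edge it could
  -- gain is `e`, but then `S` would contain `T`, hence equal it, although `T` lacks `s(x, y)`
  -- unless `e = s(x, y)`.
  obtain ⟨S, hexch, hS, hStree⟩ :=
    (hT.connected.mono le_sup_left).exists_isTree_le_of_le_of_isAcyclic
      (sup_le_sup_right (T.deleteEdges_le {e}) (edge x y)) hacyclic
  have hxyS : s(x, y) ∈ S.edgeSet :=
    edgeSet_mono hexch (edgeSet_deleteEdges_sup_edge hne ▸ Set.mem_insert _ _)
  have heq_of_mem (heS : e ∈ S.edgeSet) : e = s(x, y) := by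
    have hTS : T ≤ S := le_of_deleteEdges_le (le_sup_left.trans hexch) heS
    have hST : S ≤ T := (isTree_iff_minimal_connected.1 hStree).2 hT.connected hTS
    by_contra hexy
    exact hxy (Adj.reachable (deleteEdges_adj.2 ⟨hST hxyS, Ne.symm hexy⟩))
  have hSexch : S ≤ T.deleteEdges {e} ⊔ edge x y := by
    rw [← edgeSet_subset_edgeSet, edgeSet_deleteEdges_sup_edge hne]
    intro f hf
    have hfsup : f ∈ T.edgeSet ∪ {s(x, y)} := by
      rw [← edgeSet_edge_of_ne hne, ← edgeSet_sup]
      exact edgeSet_mono hS hf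
    grind
  exact hexch.antisymm hSexch ▸ hStree

theorem add_finsum_edgeSet_deleteEdges_sup_edge {M : Type*} [AddCommMonoid M] {w : Sym2 V → M}
    (hfin : (T.edgeSet ∩ Function.support w).Finite) (he : e ∈ T.edgeSet) (hne : x ≠ y)
    (hxy : ¬(T.deleteEdges {e}).Adj x y) :
    w e + ∑ᶠ f ∈ (T.deleteEdges {e} ⊔ edge x y).edgeSet, w f =
      w s(x, y) + ∑ᶠ f ∈ T.edgeSet, w f := by
  have hfin' : ((T.edgeSet \ {e}) ∩ Function.support w).Finite :=
    hfin.subset (Set.inter_subset_inter_left _ Set.sdiff_subset)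
  have hxy' : s(x, y) ∉ T.edgeSet \ {e} := by
    rwa [← edgeSet_deleteEdges, mem_edgeSet]
  have hsum : ∑ᶠ f ∈ T.edgeSet, w f = w e + ∑ᶠ f ∈ T.edgeSet \ {e}, w f := by
    rw [← finsum_mem_insert' w (fun h ↦ h.2 rfl) hfin', Set.insert_sdiff_self_of_mem he]
  rw [edgeSet_deleteEdges_sup_edge hne, finsum_mem_insert' w hxy' hfin', hsum, add_left_comm]

end EdgeExchange

section MinSpanningTree

variable {V M : Type*} {G T : SimpleGraph V} {w : Sym2 V → M} {e : Sym2 V} {u v x y : V}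

/-- `T` is a spanning tree of `G` of minimum total weight. The total weight is a `finsum`, hence
meaningful only for trees with finitely many edges of nonzero weight. -/
structure IsMinSpanningTree [AddCommMonoid M] [LE M] (G : SimpleGraph V) (w : Sym2 V → M)
    (T : SimpleGraph V) : Prop where
  le : T ≤ G
  isTree : T.IsTree
  finsum_le : ∀ T' : SimpleGraph V, T' ≤ G → T'.IsTree →
    ∑ᶠ e ∈ T.edgeSet, w e ≤ ∑ᶠ e ∈ T'.edgeSet, w e

namespace IsMinSpanningTree

variable [AddCommMonoid M] [PartialOrder M] [IsOrderedCancelAddMonoid M]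

theorem weight_le_of_not_reachable (hT : IsMinSpanningTree G w T)
    (hfin : (T.edgeSet ∩ Function.support w).Finite) (he : e ∈ T.edgeSet) (hadj : G.Adj x y)
    (hxy : ¬(T.deleteEdges {e}).Reachable x y) : w e ≤ w s(x, y) := by
  have hle : T.deleteEdges {e} ⊔ edge x y ≤ G :=
    sup_le ((T.deleteEdges_le _).trans hT.le) ((edge_le_iff G).2 (Or.inr hadj))
  have hsum := hT.finsum_le _ hle (isTree_deleteEdges_sup_edge hT.isTree hxy)
  have hexch := add_finsum_edgeSet_deleteEdges_sup_edge hfin he hadj.ne fun h ↦ hxy h.reachable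
  exact le_of_add_le_add_right ((add_le_add_right hsum (w e)).trans_eq hexch)

theorem exists_mem_edges_weight_le (hT : IsMinSpanningTree G w T)
    (hfin : (T.edgeSet ∩ Function.support w).Finite) {p : T.Walk u v} (hp : p.IsPath)
    (q : G.Walk u v) (he : e ∈ p.edges) : ∃ f ∈ q.edges, w e ≤ w f := by
  obtain ⟨x, y, hq, hxy⟩ := exists_mem_edges_not_reachable q
    (not_reachable_deleteEdges_of_mem_edges hT.isTree.isAcyclic hp he)
  exact ⟨s(x, y), hq, hT.weight_le_of_not_reachable hfin (p.edges_subset_edgeSet he)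
    (q.adj_of_mem_edges hq) hxy⟩

end IsMinSpanningTree

end MinSpanningTree

section PathMax

variable {V : Type*} {G H : SimpleGraph V} {w : Sym2 V → ℝ} {e : Sym2 V} {u v : V}

theorem le_walkMax {p : G.Walk u v} (he : e ∈ p.edges) : w e ≤ walkMax w p :=
  le_csSup (p.edges.finite_toSet.image w).bddAbove (Set.mem_image_of_mem w he)

theorem walkMax_of_nil {p : G.Walk u v} (hp : p.Nil) : walkMax w p = 0 := by
  simp [walkMax, Walk.edges_eq_nil.2 hp]

theorem walkMax_mapLe (hGH : G ≤ H) (p : G.Walk u v) :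
    walkMax w (p.mapLe hGH) = walkMax w p := by
  rw [walkMax, walkMax, Walk.edges_mapLe_eq_edges]

theorem walkMax_le_walkMax {p : G.Walk u v} {q : H.Walk u v} (hq : q.IsPath)
    (hpq : ∀ e ∈ p.edges, ∃ f ∈ q.edges, w e ≤ w f) : walkMax w p ≤ walkMax w q := by
  by_cases hp : p.Nil
  · obtain rfl := hp.eq
    rw [walkMax_of_nil hp, walkMax_of_nil (Walk.isPath_iff_nil.1 hq)]
  · have hne : {e | e ∈ p.edges}.Nonempty :=
      List.exists_mem_of_ne_nil _ (mt Walk.edges_eq_nil.1 hp)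
    refine csSup_le (hne.image w) ?_
    rintro _ ⟨e, he, rfl⟩
    obtain ⟨f, hf, hef⟩ := hpq e he
    exact hef.trans (le_walkMax hf)

theorem pathMax_eq_walkMax {p : G.Walk u v} (hp : p.IsPath)
    (hmin : ∀ q : G.Walk u v, q.IsPath → walkMax w p ≤ walkMax w q) :
    pathMax G w u v = walkMax w p := by
  refine IsLeast.csInf_eq ⟨⟨p, hp, rfl⟩, ?_⟩
  rintro _ ⟨q, hq, rfl⟩
  exact hmin q hq

theorem pathMax_eq_walkMax_of_isAcyclic (hG : G.IsAcyclic) {p : G.Walk u v} (hp : p.IsPath) :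
    pathMax G w u v = walkMax w p :=
  pathMax_eq_walkMax hp fun _ hq ↦
    (congrArg (walkMax w) (eq_of_isPath_of_isAcyclic hG hp hq)).le

end PathMax

theorem mst_pathMax_equivalent_general {V : Type*} {G T : SimpleGraph V} {w : Sym2 V → ℝ}
    (hT : IsMinSpanningTree G w T) (hfin : (T.edgeSet ∩ Function.support w).Finite) (u v : V) :
    pathMax T w u v = pathMax G w u v := by
  obtain ⟨p, hp⟩ := hT.isTree.connected.exists_isPath u v
  have hpG : (p.mapLe hT.le).IsPath := (Walk.isPath_mapLe hT.le).2 hp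
  have hmin (q : G.Walk u v) (hq : q.IsPath) : walkMax w (p.mapLe hT.le) ≤ walkMax w q := by
    rw [walkMax_mapLe]
    exact walkMax_le_walkMax hq fun _ he ↦ hT.exists_mem_edges_weight_le hfin hp q he
  rw [pathMax_eq_walkMax_of_isAcyclic hT.isTree.isAcyclic hp, pathMax_eq_walkMax hpG hmin,
    walkMax_mapLe]

/-- A minimum spanning tree of a connected graph with edge weights injective on
the edge set is path-max equivalent to the graph. -/
theorem mst_pathMax_equivalent {V : Type*} [Fintype V] (G : SimpleGraph V)
    (w : Sym2 V → ℝ) (hG : G.Connected) (hw : Set.InjOn w G.edgeSet)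
    (T : SimpleGraph V) (hTG : T ≤ G) (hTc : T.Connected) (hTa : T.IsAcyclic)
    (hmin : ∀ T' : SimpleGraph V, T' ≤ G → T'.Connected → T'.IsAcyclic →
      (∑ᶠ e ∈ T.edgeSet, w e) ≤ ∑ᶠ e ∈ T'.edgeSet, w e) :
    ∀ u v : V, pathMax T w u v = pathMax G w u v :=
  mst_pathMax_equivalent_general ⟨hTG, ⟨hTc, hTa⟩, fun T' hT'G hT' ↦
    hmin T' hT'G hT'.connected hT'.isAcyclic⟩ (Set.toFinite _)
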